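/- Let r be a positive integer. Then there exists a strictly increasing sequence (a_n)_{n≥1} of positive integers with E(A_N) = Θ( N³ / ( log(N) · log₂(N) · … · log_r(N) ) ) such that NPPC((a_n)_n) has full Lebesgue measure in [0,1]. Here log_r denotes the r-fold iterated logarithm, log_r(x) := log_{r−1}(log x) and log₁(x) := log x. -/

import Mathlib

open Filter MeasureTheory
open scoped Classical

/-- Distance from a real number to the nearest integer. -/
noncomputable def dni (x : ℝ) : ℝ := |x - round x|

/-- Additive energy of a finite set of naturals:
`#{(a,b,c,d) ∈ I⁴ : a + b = c + d}`. -/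
def addEnergy (A : Finset ℕ) : ℕ :=
  (((A ×ˢ A) ×ˢ (A ×ˢ A)).filter fun q => q.1.1 + q.1.2 = q.2.1 + q.2.2).card

/-- The truncation `A_N = {a_n : 1 ≤ n ≤ N}`. -/
def trunc (a : ℕ → ℕ) (N : ℕ) : Finset ℕ := (Finset.Icc 1 N).image a

/-- Pair correlation function `R([-s,s], α, N)`. -/
noncomputable def pcf (a : ℕ → ℕ) (s α : ℝ) (N : ℕ) : ℝ :=
  (((Finset.Icc 1 N ×ˢ Finset.Icc 1 N).filter fun p =>
      p.1 ≠ p.2 ∧ dni (α * (a p.1 : ℝ) - α * (a p.2 : ℝ)) ≤ s / N).card : ℝ) / N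

/-- `(α a_n)_n` has Poissonian pair correlations. -/
def hasPPC (a : ℕ → ℕ) (α : ℝ) : Prop :=
  ∀ s : ℝ, 0 ≤ s → Tendsto (fun N => pcf a s α N) atTop (nhds (2 * s))

/-- The exceptional set `NPPC((a_n)_n)` of `α ∈ (0,1)` without PPC. -/
def NPPC (a : ℕ → ℕ) : Set ℝ := {α | α ∈ Set.Ioo (0 : ℝ) 1 ∧ ¬ hasPPC a α}

/-- `iterLog r x` is the `r`-fold iterated logarithm `log_r(x)`;
`iterLog 0 x = x`, `iterLog 1 x = log x`, `iterLog (r+1) x = iterLog r (log x)`. -/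
noncomputable def iterLog : ℕ → ℝ → ℝ
  | 0, x => x
  | n + 1, x => iterLog n (Real.log x)

/-!
The indices are cut into dyadic ranges `[2 ^ j, 2 ^ (j + 1))`. In the `j`-th range the first `L j`
terms form an arithmetic progression, and otherwise the sequence grows so fast that an additive
quadruple is trivial or stays inside one progression. Hence `E(A_N)` is of order
`N ^ 2 + ∑ L j ^ 3`, the sum being over `2 ^ j ≤ N`, and `L j` is tuned to the prescribed energy.

If `h * α` times the common difference of the `j`-th progression is very close to an integer for
some small `h`, that progression alone produces so many close pairs that the pair correlation
function at `s = 1`, `N = 2 ^ (j + 1)` is at least `3 > 2`. Since distinct Farey fractions are well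
separated, this happens for a proportion `≫ L j ^ 3 / 8 ^ j` of all `α`, and up to a small
modification the event only depends on the `j`-th digit of `α` in a mixed radix expansion. As digits
are independent, almost every `α` is caught infinitely often as soon as `∑ L j ^ 3 / 8 ^ j`
diverges. For `L j ^ 3 / 8 ^ j ≈ 1 / (log · ⋯ · log_r) (2 ^ j)` the divergence is seen by comparison
with the increments of `log_{r + 1} (2 ^ j)`.
-/

section AdditiveEnergy

open scoped Pointwise

lemma addEnergy_eq_finset_addEnergy (A : Finset ℕ) : addEnergy A = Finset.addEnergy A A := by
  rw [Finset.addEnergy_eq_card_filter, addEnergy]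

lemma addEnergy_mono {A B : Finset ℕ} (h : A ⊆ B) : addEnergy A ≤ addEnergy B := by
  simpa only [addEnergy_eq_finset_addEnergy] using Finset.addEnergy_mono h h

lemma addEnergy_le_card_pow_three (A : Finset ℕ) : addEnergy A ≤ A.card ^ 3 := by
  have hcard : ((A ×ˢ A) ×ˢ A).card = A.card ^ 3 := by simp only [Finset.card_product]; ring
  rw [← hcard, addEnergy]
  refine Finset.card_le_card_of_injOn (fun q => (q.1, q.2.1)) (fun q hq => ?_) ?_
  · simp only [Finset.coe_filter, Finset.mem_product, Set.mem_ofPred_eq] at hq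
    simp only [Finset.coe_product, Set.mem_prod, Finset.mem_coe]
    tauto
  · rintro ⟨⟨x, y⟩, z, w⟩ hq ⟨⟨x', y'⟩, z', w'⟩ hq' h
    simp only [Finset.coe_filter, Set.mem_ofPred_eq] at hq hq'
    simp only [Prod.mk.injEq] at h ⊢
    omega

lemma pow_three_le_two_mul_addEnergy_image_range (b L : ℕ) {D : ℕ} (hD : 0 < D) :
    L ^ 3 ≤ 2 * addEnergy ((Finset.range L).image fun i => b + D * i) := by
  set P := (Finset.range L).image fun i => b + D * i with hP
  have hcard : P.card = L := by
    rw [hP, Finset.card_image_of_injective _ fun i j h => ?_, Finset.card_range]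
    exact Nat.eq_of_mul_eq_mul_left hD (Nat.add_left_cancel h)
  have hsum : (P + P).card ≤ 2 * L := by
    refine (Finset.card_le_card (t := (Finset.range (2 * L)).image fun i => 2 * b + D * i)
      (Finset.add_subset_iff.2 ?_)).trans (Finset.card_image_le.trans_eq (Finset.card_range _))
    simp only [hP, Finset.mem_image, Finset.mem_range]
    rintro _ ⟨i, hi, rfl⟩ _ ⟨k, hk, rfl⟩
    exact ⟨i + k, by omega, by ring⟩
  have hCS : L ^ 2 * L ^ 2 ≤ (P + P).card * addEnergy P := by
    simpa only [hcard, addEnergy_eq_finset_addEnergy] using Finset.le_card_add_mul_addEnergy P P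
  rcases Nat.eq_zero_or_pos L with rfl | hL
  · simp
  · refine Nat.le_of_mul_le_mul_left ?_ hL
    calc L * L ^ 3 = L ^ 2 * L ^ 2 := by ring
      _ ≤ 2 * L * addEnergy P := hCS.trans (Nat.mul_le_mul_right _ hsum)
      _ = L * (2 * addEnergy P) := by ring

lemma addEnergy_le_two_mul_card_sq_add_sum {ι : Type*} {A : Finset ℕ} {s : Finset ι}
    {P : ι → Finset ℕ}
    (h : ∀ a ∈ A, ∀ b ∈ A, ∀ c ∈ A, ∀ d ∈ A, a + b = c + d →
      (a = c ∧ b = d) ∨ (a = d ∧ b = c) ∨ ∃ i ∈ s, a ∈ P i ∧ b ∈ P i ∧ c ∈ P i ∧ d ∈ P i) :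
    addEnergy A ≤ 2 * A.card ^ 2 + ∑ i ∈ s, addEnergy (P i) := by
  set T : Finset ((ℕ × ℕ) × ℕ × ℕ) :=
    (A ×ˢ A).image (fun p => (p, p)) ∪ (A ×ˢ A).image (fun p => (p, p.swap))
  have hT : T.card ≤ 2 * A.card ^ 2 := by
    have hAA : (A ×ˢ A).card = A.card ^ 2 := by rw [Finset.card_product, sq]
    rw [two_mul, ← hAA]
    exact (Finset.card_union_le _ _).trans (add_le_add Finset.card_image_le Finset.card_image_le)
  have hsub : (((A ×ˢ A) ×ˢ (A ×ˢ A)).filter fun q => q.1.1 + q.1.2 = q.2.1 + q.2.2) ⊆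
      T ∪ s.biUnion fun i => ((P i ×ˢ P i) ×ˢ (P i ×ˢ P i)).filter
        fun q => q.1.1 + q.1.2 = q.2.1 + q.2.2 := by
    rintro ⟨⟨a, b⟩, c, d⟩ hq
    simp only [Finset.mem_filter, Finset.mem_product] at hq
    obtain ⟨⟨⟨ha, hb⟩, hc, hd⟩, he⟩ := hq
    have hab : (a, b) ∈ A ×ˢ A := Finset.mk_mem_product ha hb
    rcases h a ha b hb c hc d hd he with ⟨rfl, rfl⟩ | ⟨rfl, rfl⟩ | ⟨i, hi, hai, hbi, hci, hdi⟩
    · exact Finset.mem_union_left _ (Finset.mem_union_left _ (Finset.mem_image_of_mem _ hab))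
    · exact Finset.mem_union_left _ (Finset.mem_union_right _ (Finset.mem_image_of_mem _ hab))
    · refine Finset.mem_union_right _ (Finset.mem_biUnion.2 ⟨i, hi, ?_⟩)
      simp only [Finset.mem_filter, Finset.mem_product]
      exact ⟨⟨⟨hai, hbi⟩, hci, hdi⟩, he⟩
  calc addEnergy A ≤ _ := Finset.card_le_card hsub
    _ ≤ _ := Finset.card_union_le _ _
    _ ≤ _ := add_le_add hT Finset.card_biUnion_le

end AdditiveEnergy

section BlockSequence

/-- The dyadic interval `[2 ^ j, 2 ^ (j + 1))` of indices starts with the block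
`[2 ^ j, 2 ^ j + L j)`, along which the sequence will run through an arithmetic progression. -/
def block (L : ℕ → ℕ) (j : ℕ) : Finset ℕ := Finset.Ico (2 ^ j) (2 ^ j + L j)

/-- The indices are partitioned into groups: each block is a group, and every index outside the
blocks is a group of its own. A group is represented by its least element. -/
def groupStart (L : ℕ → ℕ) (n : ℕ) : ℕ :=
  if n ∈ block L (Nat.log 2 n) then 2 ^ Nat.log 2 n else n

/-- The common difference of the progression on the group starting at `k`. It exceeds all terms of
the sequence in earlier groups. -/
def groupScale (k : ℕ) : ℕ := 2 ^ k ^ 2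

/-- The sequence that runs through an arithmetic progression of length `L j` on the `j`-th block
and grows extremely fast otherwise. -/
def blockSeq (L : ℕ → ℕ) (n : ℕ) : ℕ :=
  groupScale (groupStart L n) * (2 * groupStart L n + n)

lemma groupScale_pos (k : ℕ) : 0 < groupScale k := Nat.two_pow_pos _

lemma four_mul_mul_groupScale_lt {k l : ℕ} (h : k < l) :
    4 * k * groupScale k < groupScale l := by
  have hk : 4 * k < 2 ^ (2 * k + 1) := by
    have : 2 * k < 2 ^ (2 * k) := Nat.lt_two_pow_self
    rw [pow_succ]
    omega
  calc 4 * k * groupScale k < 2 ^ (2 * k + 1) * groupScale k :=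
        Nat.mul_lt_mul_of_pos_right hk (groupScale_pos k)
    _ = groupScale (k + 1) := by rw [groupScale, groupScale, ← pow_add]; congr 1; ring
    _ ≤ groupScale l := Nat.pow_le_pow_right two_pos (Nat.pow_le_pow_left h 2)

variable {L : ℕ → ℕ} {j n x y z w : ℕ}

lemma mem_block : n ∈ block L j ↔ 2 ^ j ≤ n ∧ n < 2 ^ j + L j := Finset.mem_Ico

lemma groupStart_le (hn : n ≠ 0) : groupStart L n ≤ n := by
  unfold groupStart
  split_ifs
  · exact Nat.pow_log_le_self 2 hn
  · exact le_rfl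

lemma pow_log_le_groupStart (hn : n ≠ 0) : 2 ^ Nat.log 2 n ≤ groupStart L n := by
  unfold groupStart
  split_ifs
  · exact le_rfl
  · exact Nat.pow_log_le_self 2 hn

lemma groupStart_pos (hn : n ≠ 0) : 0 < groupStart L n :=
  (Nat.two_pow_pos _).trans_le (pow_log_le_groupStart hn)

lemma lt_two_mul_groupStart (hn : n ≠ 0) : n < 2 * groupStart L n := by
  have h₁ := Nat.lt_pow_succ_log_self one_lt_two n
  have h₂ := pow_log_le_groupStart (L := L) hn
  rw [pow_succ] at h₁
  omega

lemma log_groupStart (hn : n ≠ 0) : Nat.log 2 (groupStart L n) = Nat.log 2 n :=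
  Nat.log_eq_of_pow_le_of_lt_pow (pow_log_le_groupStart hn)
    ((groupStart_le hn).trans_lt (Nat.lt_pow_succ_log_self one_lt_two n))

lemma groupStart_of_mem_block (hL : L j ≤ 2 ^ j) (hn : n ∈ block L j) :
    groupStart L n = 2 ^ j := by
  have hlog : Nat.log 2 n = j := by
    rw [mem_block] at hn
    exact Nat.log_eq_of_pow_le_of_lt_pow hn.1 (by rw [pow_succ]; omega)
  rw [groupStart, hlog, if_pos hn]

lemma groupStart_le_groupStart_succ (hn : n ≠ 0) : groupStart L n ≤ groupStart L (n + 1) := by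
  rcases (Nat.log_mono_right n.le_succ : Nat.log 2 n ≤ Nat.log 2 (n + 1)).eq_or_lt with h | h
  · have := Nat.pow_log_le_self 2 hn
    simp only [groupStart, mem_block, ← h]
    split_ifs <;> omega
  · by_contra! hlt
    have := Nat.log_mono_right (b := 2) hlt.le
    rw [log_groupStart hn, log_groupStart (n := n + 1) (by omega)] at this
    omega

lemma mem_block_of_groupStart_eq (hx : x ≠ 0) (hy : y ≠ 0) (hxy : x ≠ y)
    (h : groupStart L x = groupStart L y) : x ∈ block L (Nat.log 2 x) := by
  have hlog : Nat.log 2 x = Nat.log 2 y := by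
    rw [← log_groupStart (L := L) hx, h, log_groupStart hy]
  have hy' := Nat.pow_log_le_self 2 hy
  simp only [groupStart, mem_block, ← hlog] at h hy' ⊢
  split_ifs at h <;> omega

lemma le_blockSeq (hn : n ≠ 0) :
    3 * (groupStart L n * groupScale (groupStart L n)) ≤ blockSeq L n := by
  rw [← mul_assoc, mul_comm]
  have := groupStart_le (L := L) hn
  exact Nat.mul_le_mul_left _ (by omega)

lemma blockSeq_lt (hn : n ≠ 0) :
    blockSeq L n < 4 * (groupStart L n * groupScale (groupStart L n)) := by
  rw [← mul_assoc, mul_comm (4 * _)]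
  have := lt_two_mul_groupStart (L := L) hn
  exact Nat.mul_lt_mul_of_pos_left (by omega) (groupScale_pos _)

lemma groupScale_le_mul_groupScale (hn : n ≠ 0) :
    groupScale (groupStart L n) ≤ groupStart L n * groupScale (groupStart L n) :=
  Nat.le_mul_of_pos_left _ (groupStart_pos hn)

lemma blockSeq_lt_groupScale {k : ℕ} (hn : n ≠ 0) (h : groupStart L n < k) :
    blockSeq L n < groupScale k :=
  (blockSeq_lt hn).trans (by rw [← mul_assoc]; exact four_mul_mul_groupScale_lt h)

lemma blockSeq_pos (hn : n ≠ 0) : 0 < blockSeq L n :=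
  Nat.mul_pos (groupScale_pos _) (by omega)

lemma blockSeq_lt_blockSeq_succ (hn : n ≠ 0) : blockSeq L n < blockSeq L (n + 1) := by
  rcases (groupStart_le_groupStart_succ (L := L) hn).eq_or_lt with h | h
  · rw [blockSeq, blockSeq, ← h]
    exact Nat.mul_lt_mul_of_pos_left (by omega) (groupScale_pos _)
  · have hlt := blockSeq_lt_groupScale hn h
    have hscale := groupScale_le_mul_groupScale (L := L) (n := n + 1) (by omega)
    have hle := le_blockSeq (L := L) (n := n + 1) (by omega)
    omega

lemma blockSeq_strictMonoOn : StrictMonoOn (blockSeq L) {n | n ≠ 0} :=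
  strictMonoOn_of_lt_add_one ⟨fun _ _ _ _ _ _ => by grind⟩
    fun _ _ hn _ => blockSeq_lt_blockSeq_succ hn

lemma blockSeq_inj (hx : x ≠ 0) (hy : y ≠ 0) : blockSeq L x = blockSeq L y ↔ x = y :=
  blockSeq_strictMonoOn.injOn.eq_iff hx hy

-- Division by the common difference recovers the index of the dominant term.
lemma eq_and_eq_of_blockSeq_add_eq_of_lt (hy : y ≠ 0) (hw : w ≠ 0)
    (hzx : groupStart L z = groupStart L x) (hyx : groupStart L y < groupStart L x)
    (hwx : groupStart L w < groupStart L x)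
    (h : blockSeq L x + blockSeq L y = blockSeq L z + blockSeq L w) : x = z ∧ y = w := by
  have hquot : ∀ u v, v ≠ 0 → groupStart L u = groupStart L x →
      groupStart L v < groupStart L x →
      (blockSeq L u + blockSeq L v) / groupScale (groupStart L x) = 2 * groupStart L x + u := by
    intro u v hv hu hlt
    rw [blockSeq, hu, Nat.mul_add_div (groupScale_pos _),
      Nat.div_eq_of_lt (blockSeq_lt_groupScale hv hlt), add_zero]
  have hxz : x = z := by
    have := hquot z w hw hzx hwx
    rw [← h, hquot x y hy rfl hyx] at this
    omega
  subst hxz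
  exact ⟨rfl, (blockSeq_inj hy hw).1 (Nat.add_left_cancel h)⟩

lemma eq_or_groupStart_eq_of_blockSeq_add_eq_of_le (hx : x ≠ 0) (hy : y ≠ 0) (hz : z ≠ 0)
    (hw : w ≠ 0) (h : blockSeq L x + blockSeq L y = blockSeq L z + blockSeq L w)
    (hyx : groupStart L y ≤ groupStart L x) (hzx : groupStart L z ≤ groupStart L x)
    (hwx : groupStart L w ≤ groupStart L x) :
    (x = z ∧ y = w) ∨ (x = w ∧ y = z) ∨ (groupStart L y = groupStart L x ∧
      groupStart L z = groupStart L x ∧ groupStart L w = groupStart L x) := by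
  -- A term of the top group lies in `[3 * V, 4 * V)` and every other term is below `V`, so both
  -- sides of `h` contain equally many terms of the top group.
  set V := groupStart L x * groupScale (groupStart L x) with hV
  have hrange : ∀ u, u ≠ 0 → groupStart L u = groupStart L x →
      3 * V ≤ blockSeq L u ∧ blockSeq L u < 4 * V := fun u hu hux => by
    rw [hV, ← hux]
    exact ⟨le_blockSeq hu, blockSeq_lt hu⟩
  have hsmall : ∀ u, u ≠ 0 → groupStart L u < groupStart L x → blockSeq L u < V :=
    fun u hu hux => (blockSeq_lt_groupScale hu hux).trans_le (groupScale_le_mul_groupScale hx)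
  have hxV := hrange x hx rfl
  rcases hyx.eq_or_lt with ey | sy <;> rcases hzx.eq_or_lt with ez | sz <;>
    rcases hwx.eq_or_lt with ew | sw
  · exact Or.inr (Or.inr ⟨ey, ez, ew⟩)
  · have := hrange y hy ey; have := hrange z hz ez; have := hsmall w hw sw; omega
  · have := hrange y hy ey; have := hsmall z hz sz; have := hrange w hw ew; omega
  · have := hsmall z hz sz; have := hsmall w hw sw; omega
  · have := hsmall y hy sy; have := hrange z hz ez; have := hrange w hw ew; omega
  · exact Or.inl (eq_and_eq_of_blockSeq_add_eq_of_lt hy hw ez sy sw h)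
  · rw [add_comm (blockSeq L z)] at h
    exact Or.inr (Or.inl (eq_and_eq_of_blockSeq_add_eq_of_lt hy hz ew sy sz h))
  · have := hsmall z hz sz; have := hsmall w hw sw; omega

lemma eq_or_groupStart_eq_of_blockSeq_add_eq (hx : x ≠ 0) (hy : y ≠ 0) (hz : z ≠ 0) (hw : w ≠ 0)
    (h : blockSeq L x + blockSeq L y = blockSeq L z + blockSeq L w) :
    (x = z ∧ y = w) ∨ (x = w ∧ y = z) ∨ (groupStart L y = groupStart L x ∧
      groupStart L z = groupStart L x ∧ groupStart L w = groupStart L x) := by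
  have hmax : ∀ a b c d : ℕ, (b ≤ a ∧ c ≤ a ∧ d ≤ a) ∨ (a ≤ b ∧ c ≤ b ∧ d ≤ b) ∨
      (d ≤ c ∧ a ≤ c ∧ b ≤ c) ∨ (c ≤ d ∧ a ≤ d ∧ b ≤ d) := by omega
  rcases hmax (groupStart L x) (groupStart L y) (groupStart L z) (groupStart L w) with
    ⟨h₁, h₂, h₃⟩ | ⟨h₁, h₂, h₃⟩ | ⟨h₁, h₂, h₃⟩ | ⟨h₁, h₂, h₃⟩
  · exact eq_or_groupStart_eq_of_blockSeq_add_eq_of_le hx hy hz hw h h₁ h₂ h₃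
  · have := eq_or_groupStart_eq_of_blockSeq_add_eq_of_le hy hx hz hw (by omega) h₁ h₂ h₃
    omega
  · have := eq_or_groupStart_eq_of_blockSeq_add_eq_of_le hz hw hx hy h.symm h₁ h₂ h₃
    omega
  · have := eq_or_groupStart_eq_of_blockSeq_add_eq_of_le hw hz hx hy (by omega) h₁ h₂ h₃
    omega

lemma eq_or_mem_block_of_blockSeq_add_eq (hx : x ≠ 0) (hy : y ≠ 0) (hz : z ≠ 0) (hw : w ≠ 0)
    (h : blockSeq L x + blockSeq L y = blockSeq L z + blockSeq L w) :
    (x = z ∧ y = w) ∨ (x = w ∧ y = z) ∨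
      (x ∈ block L (Nat.log 2 x) ∧ y ∈ block L (Nat.log 2 x) ∧
        z ∈ block L (Nat.log 2 x) ∧ w ∈ block L (Nat.log 2 x)) := by
  rcases eq_or_groupStart_eq_of_blockSeq_add_eq hx hy hz hw h with h | h | ⟨hyx, hzx, hwx⟩
  · exact Or.inl h
  · exact Or.inr (Or.inl h)
  · by_cases hall : y = x ∧ z = x ∧ w = x
    · exact Or.inl ⟨hall.2.1.symm, hall.1.trans hall.2.2.symm⟩
    obtain ⟨v, hv, hvx, hne⟩ : ∃ v, v ≠ 0 ∧ groupStart L v = groupStart L x ∧ v ≠ x := by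
      by_contra! hcon
      exact hall ⟨hcon y hy hyx, hcon z hz hzx, hcon w hw hwx⟩
    have hblock : ∀ u, u ≠ 0 → groupStart L u = groupStart L x →
        u ∈ block L (Nat.log 2 x) := by
      intro u hu hux
      rw [← log_groupStart (L := L) hx, ← hux, log_groupStart hu]
      by_cases hux' : u = x
      · exact mem_block_of_groupStart_eq hu hv (hux' ▸ hne.symm) (hux.trans hvx.symm)
      · exact mem_block_of_groupStart_eq hu hx hux' hux
    exact Or.inr (Or.inr ⟨hblock x hx rfl, hblock y hy hyx, hblock z hz hzx, hblock w hw hwx⟩)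

lemma addEnergy_trunc_blockSeq_le (L : ℕ → ℕ) (N : ℕ) :
    addEnergy (trunc (blockSeq L) N) ≤
      2 * N ^ 2 + ∑ i ∈ Finset.range (Nat.log 2 N + 1), L i ^ 3 := by
  have hA : (trunc (blockSeq L) N).card ≤ N :=
    Finset.card_image_le.trans_eq (by rw [Nat.card_Icc, Nat.add_sub_cancel])
  have hP : ∀ i, ((block L i).image (blockSeq L)).card ≤ L i := fun i =>
    Finset.card_image_le.trans_eq (by rw [block, Nat.card_Ico, Nat.add_sub_cancel_left])
  calc addEnergy (trunc (blockSeq L) N)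
      ≤ 2 * (trunc (blockSeq L) N).card ^ 2 + ∑ i ∈ Finset.range (Nat.log 2 N + 1),
          addEnergy ((block L i).image (blockSeq L)) := by
        refine addEnergy_le_two_mul_card_sq_add_sum ?_
        simp only [trunc, Finset.forall_mem_image, Finset.mem_Icc]
        intro x hx y hy z hz w hw h
        rcases eq_or_mem_block_of_blockSeq_add_eq (by omega) (by omega) (by omega) (by omega) h
          with ⟨rfl, rfl⟩ | ⟨rfl, rfl⟩ | ⟨hxb, hyb, hzb, hwb⟩
        · exact Or.inl ⟨rfl, rfl⟩
        · exact Or.inr (Or.inl ⟨rfl, rfl⟩)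
        · exact Or.inr (Or.inr ⟨Nat.log 2 x,
            Finset.mem_range_succ_iff.2 (Nat.log_mono_right hx.2),
            Finset.mem_image_of_mem _ hxb, Finset.mem_image_of_mem _ hyb,
            Finset.mem_image_of_mem _ hzb, Finset.mem_image_of_mem _ hwb⟩)
    _ ≤ 2 * N ^ 2 + ∑ i ∈ Finset.range (Nat.log 2 N + 1), L i ^ 3 := by
        gcongr with i
        exact (addEnergy_le_card_pow_three _).trans (Nat.pow_le_pow_left (hP i) 3)

lemma blockSeq_two_pow_add {i : ℕ} (hL : L j ≤ 2 ^ j) (hi : i < L j) :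
    blockSeq L (2 ^ j + i) = 3 * 2 ^ j * groupScale (2 ^ j) + groupScale (2 ^ j) * i := by
  rw [blockSeq, groupStart_of_mem_block hL (mem_block.2 (by omega))]
  ring

lemma pow_three_le_two_mul_addEnergy_trunc_blockSeq {N : ℕ} (hL : L j ≤ 2 ^ j)
    (hN : 2 ^ (j + 1) ≤ N) : L j ^ 3 ≤ 2 * addEnergy (trunc (blockSeq L) N) := by
  refine (pow_three_le_two_mul_addEnergy_image_range
    (3 * 2 ^ j * groupScale (2 ^ j)) _ (groupScale_pos (2 ^ j))).trans
    (Nat.mul_le_mul_left 2 (addEnergy_mono (Finset.image_subset_iff.2 fun i hi => ?_)))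
  rw [Finset.mem_range] at hi
  rw [← blockSeq_two_pow_add hL hi]
  have := Nat.two_pow_pos j
  exact Finset.mem_image_of_mem _ (Finset.mem_Icc.2 ⟨by omega, by rw [pow_succ] at hN; omega⟩)

end BlockSequence

section PairCorrelation

lemma dni_le_abs_sub (x : ℝ) (z : ℤ) : dni x ≤ |x - z| := round_le x z

lemma dni_natCast_mul_le (k : ℕ) (x : ℝ) : dni (k * x) ≤ k * dni x := by
  calc dni (k * x) ≤ |k * x - (k * round x : ℤ)| := dni_le_abs_sub _ _
    _ = |(k : ℝ) * (x - round x)| := by push_cast; rw [mul_sub]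
    _ = k * dni x := by rw [abs_mul, Nat.abs_cast, dni]

lemma dni_le_dni_add_abs_sub (x y : ℝ) : dni x ≤ dni y + |x - y| :=
  calc dni x ≤ |x - round y| := dni_le_abs_sub _ _
    _ ≤ |x - y| + |y - round y| := abs_sub_le _ _ _
    _ = dni y + |x - y| := add_comm _ _

lemma dni_natCast_mul_fract (n : ℕ) (x : ℝ) : dni (n * Int.fract x) = dni (n * x) := by
  have hsub : n * Int.fract x = n * x - (n * ⌊x⌋ : ℤ) := by rw [Int.fract]; push_cast; ring
  rw [hsub, dni, dni, round_sub_intCast]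
  push_cast
  congr 1
  ring

-- The pairs of terms whose positions in the progression differ by `k * h` with `1 ≤ k ≤ K`.
lemma le_pcf_of_arithProg {a : ℕ → ℕ} {M L b D N h K : ℕ} {α s : ℝ}
    (ha : ∀ i < L, a (M + i) = b + D * i) (hM : 0 < M) (hN : M + L ≤ N + 1) (hh : 0 < h)
    (hα : dni (α * (D * h)) ≤ s / (N * K)) :
    ((K * (L - K * h) : ℕ) : ℝ) / N ≤ pcf a s α N := by
  have hclose : ∀ k i, k ≤ K → k ≠ 0 → i + k * h < L →
      dni (α * a (M + (i + k * h)) - α * a (M + i)) ≤ s / N := by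
    intro k i hkK hk hi
    have hK : (0 : ℝ) < K := by exact_mod_cast (Nat.pos_of_ne_zero hk).trans_le hkK
    have hdiff : α * a (M + (i + k * h)) - α * a (M + i) = k * (α * (D * h)) := by
      rw [ha _ hi, ha i (by omega)]
      push_cast
      ring
    calc dni (α * a (M + (i + k * h)) - α * a (M + i)) ≤ k * dni (α * (D * h)) :=
          hdiff ▸ dni_natCast_mul_le k _
      _ ≤ K * dni (α * (D * h)) :=
          mul_le_mul_of_nonneg_right (Nat.cast_le.2 hkK) (abs_nonneg _)
      _ ≤ K * (s / (N * K)) := by gcongr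
      _ = s / N := by field_simp
  have hcard : (Finset.Icc 1 K ×ˢ Finset.range (L - K * h)).card = K * (L - K * h) := by simp
  rw [← hcard, pcf]
  refine div_le_div_of_nonneg_right (Nat.cast_le.2 ?_) N.cast_nonneg
  refine Finset.card_le_card_of_injOn (fun p : ℕ × ℕ => (M + (p.2 + p.1 * h), M + p.2)) ?_ ?_
  · rintro ⟨k, i⟩ hp
    simp only [Finset.coe_product, Set.mem_prod, Finset.mem_coe, Finset.mem_Icc,
      Finset.mem_range] at hp
    obtain ⟨⟨hk, hkK⟩, hi⟩ := hp
    have hkh : k * h ≤ K * h := Nat.mul_le_mul_right h hkK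
    have hkh' : 0 < k * h := Nat.mul_pos hk hh
    simp only [Finset.coe_filter, Set.mem_ofPred_eq, Finset.mem_product, Finset.mem_Icc]
    exact ⟨by omega, by omega, hclose k i hkK (by omega) (by omega)⟩
  · rintro ⟨k, i⟩ - ⟨k', i'⟩ - he
    simp only [Prod.mk.injEq] at he ⊢
    have hi : i = i' := by omega
    exact ⟨Nat.eq_of_mul_eq_mul_right hh (by omega), hi⟩

end PairCorrelation

section FareyArcs

/-- The rational numbers in `[0, 1)` with denominator at most `H`. -/
def fareyFinset (H : ℕ) : Finset ℚ :=
  ((Finset.range H ×ˢ Finset.range (H + 1)).image fun p => (p.1 : ℚ) / p.2).filter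
    fun q => 0 ≤ q ∧ q < 1 ∧ q.den ≤ H

lemma mem_fareyFinset {H : ℕ} {q : ℚ} :
    q ∈ fareyFinset H ↔ 0 ≤ q ∧ q < 1 ∧ q.den ≤ H := by
  refine ⟨fun h => (Finset.mem_filter.1 h).2, fun h => Finset.mem_filter.2 ⟨?_, h⟩⟩
  obtain ⟨h0, h1, hd⟩ := h
  have hnum : 0 ≤ q.num := Rat.num_nonneg.2 h0
  have hlt : q.num < q.den := Rat.num_lt_denom_iff.2 h1
  refine Finset.mem_image.2 ⟨(q.num.toNat, q.den), ?_, ?_⟩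
  · simp only [Finset.mem_product, Finset.mem_range]
    omega
  · have hcast : ((q.num.toNat : ℕ) : ℚ) = q.num := by
      rw [← Int.cast_natCast, Int.toNat_of_nonneg hnum]
    rw [hcast, Rat.num_div_den]

lemma one_div_den_mul_den_le_sub {p q : ℚ} (h : p < q) :
    1 / ((p.den : ℝ) * q.den) ≤ (q : ℝ) - p := by
  suffices hQ : 1 / ((p.den : ℚ) * q.den) ≤ q - p by
    simpa only [Rat.cast_div, Rat.cast_one, Rat.cast_mul, Rat.cast_natCast, Rat.cast_sub]
      using (Rat.cast_le (K := ℝ)).2 hQ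
  rw [div_le_iff₀ (by positivity)]
  have hnum : (q - p) * (p.den * q.den) = ((q.num * p.den - p.num * q.den : ℤ) : ℚ) := by
    push_cast
    rw [← Rat.mul_den_eq_num q, ← Rat.mul_den_eq_num p]
    ring
  have hpos : 0 < (q - p) * (p.den * q.den) := mul_pos (sub_pos.2 h) (by positivity)
  rw [hnum] at hpos ⊢
  exact_mod_cast (Int.cast_pos.1 hpos : 0 < q.num * p.den - p.num * q.den)

lemma exists_mem_fareyFinset_abs_sub_le {H : ℕ} (hH : 2 ≤ H) {x : ℝ}
    (hx : x ∈ Set.Icc (0 : ℝ) (1 / 2)) :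
    ∃ q ∈ fareyFinset H, |x - q| ≤ 1 / ((H + 1) * q.den) := by
  obtain ⟨q, hq, hd⟩ := Real.exists_rat_abs_sub_le_and_den_le x (n := H) (by omega)
  refine ⟨q, mem_fareyFinset.2 ⟨?_, ?_, hd⟩, hq⟩ <;> rw [abs_le] at hq
  · have hq0 : (0 : ℝ) < q.den := by exact_mod_cast q.den_pos
    have hH0 : (0 : ℝ) < H := by exact_mod_cast (by omega : 0 < H)
    have hlt : 1 / (((H : ℝ) + 1) * q.den) < 1 / q.den :=
      one_div_lt_one_div_of_lt hq0 (lt_mul_of_one_lt_left hq0 (by linarith))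
    have hneg : -1 < (q : ℝ) * q.den := by
      have := mul_lt_mul_of_pos_right (by linarith [hx.1] : -(1 / (q.den : ℝ)) < q) hq0
      rwa [neg_mul, one_div_mul_cancel hq0.ne'] at this
    have hnum : (-1 : ℚ) < q.num := by rw [← Rat.mul_den_eq_num]; exact_mod_cast hneg
    exact Rat.num_nonneg.1 (Int.le_iff_lt_add_one.2 (by exact_mod_cast neg_lt_iff_pos_add.1 hnum))
  · have hH' : (2 : ℝ) ≤ H := by exact_mod_cast hH
    have hd1 : (1 : ℝ) ≤ q.den := by exact_mod_cast q.den_pos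
    have hle : 1 / (((H : ℝ) + 1) * q.den) ≤ 1 / 3 :=
      one_div_le_one_div_of_le (by norm_num) (by nlinarith)
    exact_mod_cast (by linarith [hx.2] : (q : ℝ) < 1)

lemma sub_le_two_mul_sum_of_Icc_subset {ι : Type*} {s : Finset ι} {c r : ι → ℝ} {u v : ℝ}
    (hr : ∀ i ∈ s, 0 ≤ r i) (h : Set.Icc u v ⊆ ⋃ i ∈ s, Metric.closedBall (c i) (r i)) :
    v - u ≤ 2 * ∑ i ∈ s, r i := by
  have hvol := (measure_mono (μ := volume) h).trans (measure_biUnion_finset_le s _)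
  simp only [Real.volume_Icc, Real.volume_closedBall] at hvol
  have hr' : ∀ i ∈ s, 0 ≤ 2 * r i := fun i hi => mul_nonneg zero_le_two (hr i hi)
  rwa [← ENNReal.ofReal_sum_of_nonneg hr', ENNReal.ofReal_le_ofReal_iff (Finset.sum_nonneg hr'),
    ← Finset.mul_sum] at hvol

lemma le_sum_fareyFinset_one_div_den {H : ℕ} (hH : 2 ≤ H) :
    ((H : ℝ) + 1) / 4 ≤ ∑ q ∈ fareyFinset H, 1 / (q.den : ℝ) := by
  have hcover : Set.Icc (0 : ℝ) (1 / 2) ⊆ ⋃ q ∈ fareyFinset H,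
      Metric.closedBall (q : ℝ) (1 / ((H + 1) * q.den)) := fun x hx => by
    obtain ⟨q, hq, hxq⟩ := exists_mem_fareyFinset_abs_sub_le hH hx
    exact Set.mem_biUnion hq (Metric.mem_closedBall.2 hxq)
  have hlen := sub_le_two_mul_sum_of_Icc_subset (fun q _ => by positivity) hcover
  simp only [← one_div_mul_one_div, ← Finset.mul_sum] at hlen
  rw [← mul_assoc, mul_one_div, div_mul_eq_mul_div, le_div_iff₀ (by positivity)] at hlen
  linarith

lemma pairwiseDisjoint_fareyFinset_Ico {H : ℕ} {t : ℝ} (ht : t ≤ 1 / H) :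
    (fareyFinset H : Set ℚ).PairwiseDisjoint fun q => Set.Ico (q : ℝ) (q + t / q.den) := by
  have hlt : ∀ p ∈ fareyFinset H, ∀ q ∈ fareyFinset H, p < q →
      Disjoint (Set.Ico (p : ℝ) (p + t / p.den)) (Set.Ico (q : ℝ) (q + t / q.den)) := by
    intro p _ q hq hpq
    have hq0 : (0 : ℝ) < q.den := by exact_mod_cast q.den_pos
    have hqH : (q.den : ℝ) ≤ H := by exact_mod_cast (mem_fareyFinset.1 hq).2.2
    have harc : (p : ℝ) + t / p.den ≤ q := by
      rw [← le_sub_iff_add_le']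
      calc t / (p.den : ℝ) ≤ 1 / q.den / p.den := by
            gcongr
            exact ht.trans (one_div_le_one_div_of_le hq0 hqH)
        _ = 1 / (p.den * q.den) := by rw [div_div, mul_comm]
        _ ≤ q - p := one_div_den_mul_den_le_sub hpq
    exact Set.Ico_disjoint_Ico.2 ((min_le_left _ _).trans (harc.trans (le_max_right _ _)))
  intro p hp q hq hpq
  rcases lt_or_gt_of_ne hpq with h | h
  · exact hlt p hp q hq h
  · exact (hlt q hq p hp h).symm

lemma le_volume_exists_dni_natCast_mul_le {H : ℕ} {t : ℝ} (hH : 2 ≤ H) (ht : 0 ≤ t)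
    (htH : t ≤ 1 / H) :
    ENNReal.ofReal (t * ((H + 1) / 4)) ≤
      volume {x ∈ Set.Ico (0 : ℝ) 1 | ∃ h ∈ Finset.Icc 1 H, dni (h * x) ≤ t} := by
  have hsub : (⋃ q ∈ fareyFinset H, Set.Ico (q : ℝ) (q + t / q.den)) ⊆
      {x ∈ Set.Ico (0 : ℝ) 1 | ∃ h ∈ Finset.Icc 1 H, dni (h * x) ≤ t} := by
    refine Set.iUnion₂_subset fun q hq x hx => ?_
    obtain ⟨h0, h1, hd⟩ := mem_fareyFinset.1 hq
    have hq0 : (0 : ℝ) < q.den := by exact_mod_cast q.den_pos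
    have hH1 : (1 : ℝ) ≤ H := by exact_mod_cast (by omega : 1 ≤ H)
    refine ⟨⟨(Rat.cast_nonneg.2 h0).trans hx.1, ?_⟩, q.den, Finset.mem_Icc.2 ⟨q.den_pos, hd⟩, ?_⟩
    · have hgap := one_div_den_mul_den_le_sub h1
      rw [Rat.den_one, Nat.cast_one, mul_one, Rat.cast_one] at hgap
      have ht1 : t / q.den ≤ 1 / q.den := by
        gcongr
        exact htH.trans (div_le_one_of_le₀ hH1 H.cast_nonneg)
      linarith [hx.2]
    · calc dni (q.den * x) ≤ |q.den * x - q.num| := dni_le_abs_sub _ _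
        _ = |q.den * (x - q)| := by
            rw [mul_sub, ← (by exact_mod_cast Rat.den_mul_eq_num q : (q.den : ℝ) * q = q.num)]
        _ = q.den * (x - q) := abs_of_nonneg (mul_nonneg hq0.le (sub_nonneg.2 hx.1))
        _ ≤ t := by rw [← le_div_iff₀' hq0]; linarith [hx.2]
  refine le_trans ?_ (measure_mono hsub)
  rw [measure_biUnion_finset (pairwiseDisjoint_fareyFinset_Ico htH) fun _ _ => measurableSet_Ico]
  simp only [Real.volume_Ico, add_sub_cancel_left]
  rw [← ENNReal.ofReal_sum_of_nonneg fun q _ => by positivity]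
  simp only [div_eq_mul_one_div t, ← Finset.mul_sum]
  exact ENNReal.ofReal_le_ofReal
    (mul_le_mul_of_nonneg_left (le_sum_fareyFinset_one_div_den hH) ht)

end FareyArcs

section DigitExpansion

lemma abs_sub_le_of_floor_mul_eq {x y : ℝ} {Q : ℕ} (hQ : 0 < Q) (hx : 0 ≤ x) (hy : 0 ≤ y)
    (h : ⌊x * Q⌋₊ = ⌊y * Q⌋₊) : |x - y| ≤ 1 / Q := by
  have hfloor : ⌊x * Q⌋ = ⌊y * Q⌋ := by
    rw [← Int.natCast_floor_eq_floor (by positivity), h, Int.natCast_floor_eq_floor (by positivity)]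
  have hlt := Int.abs_sub_lt_one_of_floor_eq_floor hfloor
  rw [← sub_mul, abs_mul, Nat.abs_cast] at hlt
  exact (le_div_iff₀ (Nat.cast_pos.2 hQ)).2 hlt.le

lemma floor_mul_natCast_eq {x : ℝ} (hx : 0 ≤ x) (Q : ℕ) :
    ⌊x * Q⌋₊ = Q * ⌊x⌋₊ + ⌊Int.fract x * Q⌋₊ := by
  have hfract : 0 ≤ Int.fract x * Q := mul_nonneg (Int.fract_nonneg x) Q.cast_nonneg
  rw [add_comm, ← Nat.floor_add_natCast hfract]
  congr 1
  push_cast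
  rw [natCast_floor_eq_intCast_floor hx, Int.fract]
  ring

lemma floor_fract_mul_natCast_lt (x : ℝ) {Q : ℕ} (hQ : 0 < Q) : ⌊Int.fract x * Q⌋₊ < Q := by
  have hQ' : (0 : ℝ) < Q := Nat.cast_pos.2 hQ
  rw [Nat.floor_lt (mul_nonneg (Int.fract_nonneg x) hQ'.le)]
  exact mul_lt_of_lt_one_left hQ' (Int.fract_lt_one x)

lemma volume_floor_mul_mem_le {Q : ℕ} (hQ : 0 < Q) (Z : Finset ℕ) :
    volume {x : ℝ | 0 ≤ x ∧ ⌊x * Q⌋₊ ∈ Z} ≤ ENNReal.ofReal (Z.card / Q) := by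
  have hQ' : (0 : ℝ) < Q := Nat.cast_pos.2 hQ
  have hsub : {x : ℝ | 0 ≤ x ∧ ⌊x * Q⌋₊ ∈ Z} ⊆ ⋃ z ∈ Z, Set.Ico ((z : ℝ) / Q) ((z + 1) / Q) :=
    fun x hx => Set.mem_biUnion hx.2 ⟨(div_le_iff₀ hQ').2 (Nat.floor_le (mul_nonneg hx.1 hQ'.le)),
      (lt_div_iff₀ hQ').2 (Nat.lt_floor_add_one _)⟩
  refine ((measure_mono hsub).trans (measure_biUnion_finset_le Z _)).trans_eq ?_
  simp only [Real.volume_Ico, add_div, add_sub_cancel_left, Finset.sum_const, nsmul_eq_mul]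
  rw [← ENNReal.ofReal_natCast, ← ENNReal.ofReal_mul Z.card.cast_nonneg, mul_one_div]

lemma exists_finset_forall_floor_mem_exists_dni_le {H Q : ℕ} {t : ℝ} (hH : 2 ≤ H)
    (ht : 0 ≤ t) (htH : t ≤ 1 / H) (hQ : H ≤ t * Q) :
    ∃ B ⊆ Finset.range Q, t * ((H + 1) / 4) ≤ (B.card : ℝ) / Q ∧
      ∀ y : ℝ, 0 ≤ y → ⌊y * Q⌋₊ ∈ B → ∃ h ∈ Finset.Icc 1 H, dni (h * y) ≤ 2 * t := by
  have hQ0 : 0 < Q := by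
    by_contra! h0
    have hH0 : (0 : ℝ) < H := by exact_mod_cast (by omega : 0 < H)
    rw [Nat.le_zero.1 h0, Nat.cast_zero, mul_zero] at hQ
    exact hQ.not_gt hH0
  have hQ' : (0 : ℝ) < Q := Nat.cast_pos.2 hQ0
  set S := {x ∈ Set.Ico (0 : ℝ) 1 | ∃ h ∈ Finset.Icc 1 H, dni (h * x) ≤ t} with hS
  refine ⟨(Finset.range Q).filter fun b => ∃ x ∈ S, ⌊x * Q⌋₊ = b, Finset.filter_subset _ _,
    ?_, fun y hy hyB => ?_⟩
  · have hcells : S ⊆ {x : ℝ | 0 ≤ x ∧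
        ⌊x * Q⌋₊ ∈ (Finset.range Q).filter fun b => ∃ x ∈ S, ⌊x * Q⌋₊ = b} := by
      refine fun x hx => ⟨hx.1.1, Finset.mem_filter.2 ⟨Finset.mem_range.2 ?_, x, hx, rfl⟩⟩
      exact (Nat.floor_lt (mul_nonneg hx.1.1 hQ'.le)).2 (mul_lt_of_lt_one_left hQ' hx.1.2)
    exact (ENNReal.ofReal_le_ofReal_iff (by positivity)).1
      ((le_volume_exists_dni_natCast_mul_le hH ht htH).trans
        ((measure_mono hcells).trans (volume_floor_mul_mem_le hQ0 _)))
  · obtain ⟨-, x, ⟨hx, h, hh, hhx⟩, hfloor⟩ := Finset.mem_filter.1 hyB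
    refine ⟨h, hh, ?_⟩
    have hhH : (h : ℝ) ≤ H := Nat.cast_le.2 (Finset.mem_Icc.1 hh).2
    calc dni (h * y) ≤ dni (h * x) + |h * y - h * x| := dni_le_dni_add_abs_sub _ _
      _ = dni (h * x) + h * |y - x| := by rw [← mul_sub, abs_mul, Nat.abs_cast]
      _ ≤ t + H * (1 / Q) := by
          gcongr
          exact abs_sub_le_of_floor_mul_eq hQ0 hy hx.1 hfloor.symm
      _ ≤ 2 * t := by
          have : H * (1 / (Q : ℝ)) ≤ t := by rwa [mul_one_div, div_le_iff₀ hQ']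
          linarith

/-- If `δ 0 = d` and `δ (n + 1) = δ n * Q n`, the `n`-th digit of `α` is
`⌊Int.fract (α * δ n) * Q n⌋₊`. These are the values of `⌊α * δ n⌋₊` on those `α ∈ [0, 1)` whose
`j`-th digit is outside `B j` for all `j < n`. -/
def avoidingFloors (d : ℕ) (Q : ℕ → ℕ) (B : ℕ → Finset ℕ) : ℕ → Finset ℕ
  | 0 => Finset.range d
  | n + 1 => (avoidingFloors d Q B n ×ˢ (Finset.range (Q n) \ B n)).image
      fun p => Q n * p.1 + p.2

variable {δ Q : ℕ → ℕ} {B : ℕ → Finset ℕ}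

lemma floor_mul_mem_avoidingFloors (hδ : ∀ n, δ (n + 1) = δ n * Q n) (hδ0 : ∀ n, 0 < δ n)
    {α : ℝ} (hα : α ∈ Set.Ico (0 : ℝ) 1) {n : ℕ}
    (hdigit : ∀ j < n, ⌊Int.fract (α * δ j) * Q j⌋₊ ∉ B j) :
    ⌊α * δ n⌋₊ ∈ avoidingFloors (δ 0) Q B n := by
  induction n with
  | zero =>
    have hδ' : (0 : ℝ) < δ 0 := Nat.cast_pos.2 (hδ0 0)
    rw [avoidingFloors, Finset.mem_range, Nat.floor_lt (mul_nonneg hα.1 hδ'.le)]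
    exact mul_lt_of_lt_one_left hδ' hα.2
  | succ n ih =>
    have hQ : 0 < Q n := Nat.pos_of_mul_pos_left (hδ n ▸ hδ0 (n + 1))
    rw [hδ, Nat.cast_mul, ← mul_assoc,
      floor_mul_natCast_eq (mul_nonneg hα.1 (Nat.cast_nonneg _)), avoidingFloors]
    refine Finset.mem_image.2 ⟨(_, _), Finset.mk_mem_product
      (ih fun j hj => hdigit j (by omega)) (Finset.mem_sdiff.2 ⟨?_, hdigit n (by omega)⟩), rfl⟩
    exact Finset.mem_range.2 (floor_fract_mul_natCast_lt _ hQ)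

lemma card_avoidingFloors_div_le (hδ : ∀ n, δ (n + 1) = δ n * Q n) (hδ0 : ∀ n, 0 < δ n)
    (hB : ∀ n, B n ⊆ Finset.range (Q n)) (n : ℕ) :
    ((avoidingFloors (δ 0) Q B n).card : ℝ) / δ n ≤
      ∏ j ∈ Finset.range n, (1 - ((B j).card : ℝ) / Q j) := by
  induction n with
  | zero =>
    rw [avoidingFloors, Finset.card_range, Finset.prod_range_zero]
    exact div_self_le_one _
  | succ n ih =>
    have hQ : (0 : ℝ) < Q n := Nat.cast_pos.2 (Nat.pos_of_mul_pos_left (hδ n ▸ hδ0 (n + 1)))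
    have hcompl : ((Finset.range (Q n) \ B n).card : ℝ) / Q n = 1 - ((B n).card : ℝ) / Q n := by
      rw [Finset.cast_card_sdiff (hB n), Finset.card_range, sub_div, div_self hQ.ne']
    calc ((avoidingFloors (δ 0) Q B (n + 1)).card : ℝ) / δ (n + 1)
        ≤ ((avoidingFloors (δ 0) Q B n).card * (Finset.range (Q n) \ B n).card : ℕ) /
            δ (n + 1) := by
          gcongr
          exact Finset.card_image_le.trans_eq (Finset.card_product _ _)
      _ = (avoidingFloors (δ 0) Q B n).card / δ n * (1 - ((B n).card : ℝ) / Q n) := by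
          rw [← hcompl, hδ]
          push_cast
          exact mul_div_mul_comm _ _ _ _
      _ ≤ _ := by
          rw [Finset.prod_range_succ]
          exact mul_le_mul_of_nonneg_right ih (hcompl ▸ by positivity)

lemma tendsto_prod_one_sub_nhds_zero {p : ℕ → ℝ} (h0 : ∀ n, 0 ≤ p n) (h1 : ∀ n, p n ≤ 1)
    (hp : ¬ Summable p) : Tendsto (fun n => ∏ j ∈ Finset.range n, (1 - p j)) atTop (nhds 0) := by
  have hexp : Tendsto (fun n => Real.exp (-∑ j ∈ Finset.range n, p j)) atTop (nhds 0) :=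
    Real.tendsto_exp_neg_atTop_nhds_zero.comp
      ((not_summable_iff_tendsto_nat_atTop_of_nonneg h0).1 hp)
  refine squeeze_zero (fun n => Finset.prod_nonneg fun j _ => sub_nonneg.2 (h1 j))
    (fun n => ?_) hexp
  rw [← Finset.sum_neg_distrib, Real.exp_sum]
  exact Finset.prod_le_prod (fun j _ => sub_nonneg.2 (h1 j)) fun j _ => Real.one_sub_le_exp_neg _

lemma volume_forall_digit_notMem_eq_zero (hδ : ∀ n, δ (n + 1) = δ n * Q n) (hδ0 : ∀ n, 0 < δ n)
    (hB : ∀ n, B n ⊆ Finset.range (Q n)) (hsum : ¬ Summable fun n => ((B n).card : ℝ) / Q n) :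
    volume {α ∈ Set.Ico (0 : ℝ) 1 | ∀ j, ⌊Int.fract (α * δ j) * Q j⌋₊ ∉ B j} = 0 := by
  have hdensity : ∀ n, ((B n).card : ℝ) / Q n ≤ 1 := fun n =>
    div_le_one_of_le₀ (by simpa using Finset.card_le_card (hB n)) (Nat.cast_nonneg _)
  have hlim := ENNReal.tendsto_ofReal
    (tendsto_prod_one_sub_nhds_zero (fun n => by positivity) hdensity hsum)
  rw [ENNReal.ofReal_zero] at hlim
  refine le_antisymm (ge_of_tendsto' hlim fun n => ?_) zero_le
  calc volume {α ∈ Set.Ico (0 : ℝ) 1 | ∀ j, ⌊Int.fract (α * δ j) * Q j⌋₊ ∉ B j}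
      ≤ volume {α : ℝ | 0 ≤ α ∧ ⌊α * δ n⌋₊ ∈ avoidingFloors (δ 0) Q B n} :=
        measure_mono fun α hα => ⟨hα.1.1,
          floor_mul_mem_avoidingFloors hδ hδ0 hα.1 fun j _ => hα.2 j⟩
    _ ≤ _ := (volume_floor_mul_mem_le (hδ0 n) _).trans
        (ENNReal.ofReal_le_ofReal (card_avoidingFloors_div_le hδ hδ0 hB n))

lemma ae_frequently_digit_mem (hδ : ∀ n, δ (n + 1) = δ n * Q n) (hδ0 : ∀ n, 0 < δ n)
    (hB : ∀ n, B n ⊆ Finset.range (Q n)) (hsum : ¬ Summable fun n => ((B n).card : ℝ) / Q n) :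
    ∀ᵐ α : ℝ, α ∈ Set.Ico (0 : ℝ) 1 → ∃ᶠ j in atTop, ⌊Int.fract (α * δ j) * Q j⌋₊ ∈ B j := by
  have htail : ∀ m, ∀ᵐ α : ℝ, α ∈ Set.Ico (0 : ℝ) 1 →
      ∃ j, ⌊Int.fract (α * δ (j + m)) * Q (j + m)⌋₊ ∈ B (j + m) := by
    intro m
    have hnull := volume_forall_digit_notMem_eq_zero (δ := fun n => δ (n + m))
      (Q := fun n => Q (n + m)) (B := fun n => B (n + m))
      (fun n => by rw [add_right_comm, hδ]) (fun n => hδ0 (n + m)) (fun n => hB (n + m))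
      (mt (summable_nat_add_iff (f := fun n => ((B n).card : ℝ) / Q n) m).1 hsum)
    refine measure_mono_null (fun α hα => ?_) hnull
    simpa only [Set.mem_compl_iff, Set.mem_ofPred_eq, not_forall, not_exists, exists_prop] using hα
  filter_upwards [ae_all_iff.2 htail] with α hα hmem
  refine frequently_atTop.2 fun m => ?_
  obtain ⟨j, hj⟩ := hα m hmem
  exact ⟨j + m, Nat.le_add_left m j, hj⟩

end DigitExpansion

section NonPoissonian

lemma not_hasPPC_of_frequently_three_le_pcf {a : ℕ → ℕ} {α : ℝ}
    (h : ∃ᶠ N in atTop, 3 ≤ pcf a 1 α N) : ¬ hasPPC a α := fun hPPC =>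
  h (((hPPC 1 zero_le_one).eventually_lt_const (by norm_num : (2 * 1 : ℝ) < 3)).mono
    fun _ => not_le.2)

lemma volume_NPPC_eq_one_of_ae {a : ℕ → ℕ}
    (h : ∀ᵐ α : ℝ, α ∈ Set.Ioo (0 : ℝ) 1 → ¬ hasPPC a α) : volume (NPPC a) = 1 := by
  have hae : NPPC a =ᵐ[volume] Set.Ioo (0 : ℝ) 1 := by
    filter_upwards [h] with α hα
    exact propext ⟨fun hN => hN.1, fun hI => ⟨hI, hα hI⟩⟩
  rw [measure_congr hae, Real.volume_Ioo, sub_zero, ENNReal.ofReal_one]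

/-- The ratio of the common differences of `blockSeq` on two consecutive blocks. -/
def blockRatio (j : ℕ) : ℕ := 2 ^ (3 * 4 ^ j)

lemma groupScale_two_pow_succ (j : ℕ) :
    groupScale (2 ^ (j + 1)) = groupScale (2 ^ j) * blockRatio j := by
  have hexp : (2 ^ (j + 1)) ^ 2 = (2 ^ j) ^ 2 + 3 * 4 ^ j := by
    rw [← pow_mul, ← pow_mul, pow_mul', pow_mul' 2 j]
    ring
  rw [groupScale, groupScale, blockRatio, ← pow_add, hexp]

lemma two_mul_two_pow_sq_le_blockRatio (j : ℕ) : 2 * (2 ^ j) ^ 2 ≤ blockRatio j := by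
  have hj : j < 4 ^ j := Nat.lt_pow_self (by norm_num)
  rw [← pow_mul, ← pow_succ']
  exact Nat.pow_le_pow_right two_pos (by omega)

lemma exists_multiplicity_and_height {l M : ℕ} (hM : 0 < M) (hlM : l ≤ M)
    (hMl : 52 * M ≤ l ^ 2) :
    ∃ K H : ℕ, 2 ≤ H ∧ 2 * (K * H) ≤ l ∧ 12 * M ≤ K * l ∧
      l ^ 3 * K ≤ 338 * M ^ 2 * (H + 1) := by
  have hl : 0 < l := by
    by_contra! h
    rw [Nat.le_zero.1 h] at hMl
    omega
  have hlow : 12 * M ≤ (12 * M / l + 1) * l := by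
    rw [mul_comm (_ + 1)]
    exact (Nat.lt_mul_div_succ _ hl).le
  have hup : (12 * M / l + 1) * l ≤ 13 * M := by
    rw [Nat.add_mul, one_mul]
    have := Nat.div_mul_le_self (12 * M) l
    omega
  have hK : 0 < 12 * M / l + 1 := Nat.succ_pos _
  generalize 12 * M / l + 1 = K at hlow hup hK
  refine ⟨K, l / (2 * K), ?_, ?_, hlow, ?_⟩
  · rw [Nat.le_div_iff_mul_le (by omega)]
    refine Nat.le_of_mul_le_mul_right (?_ : _ ≤ l * l) hl
    calc 2 * (2 * K) * l = 4 * (K * l) := by ring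
      _ ≤ 4 * (13 * M) := by gcongr
      _ ≤ l * l := by rw [← sq]; omega
  · rw [← mul_assoc]
    exact Nat.mul_div_le _ _
  · calc l ^ 3 * K = l ^ 2 * K * l := by ring
      _ ≤ l ^ 2 * K * (2 * K * (l / (2 * K) + 1)) := by
          gcongr
          exact (Nat.lt_mul_div_succ _ (by omega)).le
      _ = 2 * (K * l) ^ 2 * (l / (2 * K) + 1) := by ring
      _ ≤ 2 * (13 * M) ^ 2 * (l / (2 * K) + 1) := by gcongr
      _ = 338 * M ^ 2 * (l / (2 * K) + 1) := by ring

variable {L : ℕ → ℕ}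

lemma three_le_pcf_blockSeq {j K h : ℕ} {α : ℝ} (hL : L j ≤ 2 ^ j) (hh : 0 < h)
    (hKh : 2 * (K * h) ≤ L j) (hK : 12 * 2 ^ j ≤ K * L j)
    (hα : dni (h * Int.fract (α * groupScale (2 ^ j))) ≤ 2 * (1 / (4 * 2 ^ j * K))) :
    3 ≤ pcf (blockSeq L) 1 α (2 ^ (j + 1)) := by
  have hdni : dni (α * (groupScale (2 ^ j) * h)) ≤ 1 / ((2 ^ (j + 1) : ℕ) * K) :=
    calc dni (α * (groupScale (2 ^ j) * h)) = dni (h * (α * groupScale (2 ^ j))) := by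
          congr 1; ring
      _ ≤ 2 * (1 / (4 * 2 ^ j * K)) := dni_natCast_mul_fract h _ ▸ hα
      _ = 1 / ((2 ^ (j + 1) : ℕ) * K) := by
          rw [pow_succ]
          push_cast
          field_simp
          norm_num
  have hpcf := le_pcf_of_arithProg (a := blockSeq L) (M := 2 ^ j)
    (fun i hi => blockSeq_two_pow_add hL hi) (Nat.two_pow_pos j) (by rw [pow_succ]; omega) hh hdni
  refine le_trans ?_ hpcf
  have hcount : 3 * 2 ^ (j + 1) ≤ K * (L j - K * h) := by
    have hhalf : K * L j ≤ K * (2 * (L j - K * h)) := Nat.mul_le_mul_left K (by omega)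
    rw [pow_succ]
    linarith
  rw [le_div_iff₀ (by positivity)]
  exact_mod_cast hcount

lemma exists_finset_forall_digit_mem_three_le_pcf {j : ℕ} (hL : L j ≤ 2 ^ j)
    (hL' : 52 * 2 ^ j ≤ L j ^ 2) :
    ∃ B ⊆ Finset.range (blockRatio j),
      (L j : ℝ) ^ 3 / 8 ^ j ≤ 5408 * ((B.card : ℝ) / blockRatio j) ∧
      ∀ α : ℝ, ⌊Int.fract (α * groupScale (2 ^ j)) * blockRatio j⌋₊ ∈ B →
        3 ≤ pcf (blockSeq L) 1 α (2 ^ (j + 1)) := by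
  obtain ⟨K, H, hH, hKH, hK, hdensity⟩ :=
    exists_multiplicity_and_height (Nat.two_pow_pos j) hL hL'
  have hK0 : 0 < K := Nat.pos_of_mul_pos_right ((by positivity : 0 < 12 * 2 ^ j).trans_le hK)
  have hHL : H ≤ L j := by nlinarith
  have hHM : H * (4 * 2 ^ j * K) ≤ blockRatio j :=
    calc H * (4 * 2 ^ j * K) = 2 * 2 ^ j * (2 * (K * H)) := by ring
      _ ≤ 2 * 2 ^ j * 2 ^ j := by gcongr; exact hKH.trans hL
      _ = 2 * (2 ^ j) ^ 2 := by ring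
      _ ≤ blockRatio j := two_mul_two_pow_sq_le_blockRatio j
  set t : ℝ := 1 / (4 * 2 ^ j * K) with ht
  have htH : t ≤ 1 / H := by
    refine one_div_le_one_div_of_le (by positivity) ?_
    have : H ≤ 4 * 2 ^ j * K := (hHL.trans hL).trans
      (by nlinarith [Nat.two_pow_pos j])
    exact_mod_cast this
  have hHt : (H : ℝ) ≤ t * blockRatio j := by
    rw [ht, one_div_mul_eq_div, le_div_iff₀ (by positivity)]
    exact_mod_cast hHM
  obtain ⟨B, hB, hcard, hdigit⟩ :=
    exists_finset_forall_floor_mem_exists_dni_le hH (by positivity) htH hHt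
  refine ⟨B, hB, ?_, fun α hα => ?_⟩
  · have hdensity' : (L j : ℝ) ^ 3 * K ≤ 338 * (2 ^ j) ^ 2 * (H + 1) := by exact_mod_cast hdensity
    have h8 : (8 : ℝ) ^ j = (2 ^ j) ^ 3 := by rw [← pow_mul, mul_comm, pow_mul]; norm_num
    calc (L j : ℝ) ^ 3 / 8 ^ j ≤ 5408 * (t * ((H + 1) / 4)) := by
          rw [ht, h8, div_le_iff₀ (by positivity)]
          field_simp
          linarith
      _ ≤ _ := by gcongr
  · obtain ⟨h, hh, hdni⟩ := hdigit _ (Int.fract_nonneg _) hα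
    obtain ⟨hh1, hhH⟩ := Finset.mem_Icc.1 hh
    exact three_le_pcf_blockSeq hL hh1 (le_trans (by gcongr) hKH) hK hdni

theorem volume_NPPC_blockSeq_eq_one (hL : ∀ᶠ j in atTop, L j ≤ 2 ^ j)
    (hL' : ∀ᶠ j in atTop, 52 * 2 ^ j ≤ L j ^ 2)
    (hsum : ¬ Summable fun j => (L j : ℝ) ^ 3 / 8 ^ j) : volume (NPPC (blockSeq L)) = 1 := by
  have hex : ∀ j, ∃ B ⊆ Finset.range (blockRatio j), L j ≤ 2 ^ j → 52 * 2 ^ j ≤ L j ^ 2 →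
      (L j : ℝ) ^ 3 / 8 ^ j ≤ 5408 * ((B.card : ℝ) / blockRatio j) ∧
      ∀ α : ℝ, ⌊Int.fract (α * groupScale (2 ^ j)) * blockRatio j⌋₊ ∈ B →
        3 ≤ pcf (blockSeq L) 1 α (2 ^ (j + 1)) := by
    intro j
    by_cases hj : L j ≤ 2 ^ j ∧ 52 * 2 ^ j ≤ L j ^ 2
    · obtain ⟨B, hB, hgood⟩ := exists_finset_forall_digit_mem_three_le_pcf hj.1 hj.2
      exact ⟨B, hB, fun _ _ => hgood⟩
    · exact ⟨∅, Finset.empty_subset _, fun h h' => absurd ⟨h, h'⟩ hj⟩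
  choose B hB hgood using hex
  have hB' : ¬ Summable fun j => ((B j).card : ℝ) / blockRatio j := fun h => by
    refine hsum (Summable.of_norm_bounded_eventually_nat (h.mul_left 5408) ?_)
    filter_upwards [hL, hL'] with j hj hj'
    rw [Real.norm_of_nonneg (by positivity)]
    exact (hgood j hj hj').1
  refine volume_NPPC_eq_one_of_ae ?_
  filter_upwards [ae_frequently_digit_mem (δ := fun j => groupScale (2 ^ j))
    groupScale_two_pow_succ (fun j => groupScale_pos _) hB hB'] with α hα hI
  have hfreq := ((hα (Set.Ioo_subset_Ico_self hI)).and_eventually (hL.and hL')).mono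
    fun j hj => (hgood j hj.2.1 hj.2.2).2 α hj.1
  exact not_hasPPC_of_frequently_three_le_pcf
    (((tendsto_pow_atTop_atTop_of_one_lt one_lt_two).comp (tendsto_add_atTop_nat 1)).frequently
      hfreq)

end NonPoissonian

section EnergyAsymptotics

open Asymptotics

lemma isBigO_const_pow_of_const_mul_le {g : ℕ → ℝ} {c : ℝ} (hc : 0 ≤ c)
    (hpos : ∀ᶠ j in atTop, 0 < g j) (hgrow : ∀ᶠ j in atTop, c * g j ≤ g (j + 1)) :
    (fun j => c ^ j) =O[atTop] g := by
  obtain ⟨J, hJ⟩ := eventually_atTop.1 (hpos.and hgrow)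
  have hgJ := (hJ J le_rfl).1
  refine IsBigO.of_bound (c ^ J / g J) (eventually_atTop.2 ⟨J, fun j hj => ?_⟩)
  rw [Real.norm_of_nonneg (by positivity), Real.norm_of_nonneg (hJ j hj).1.le, div_mul_eq_mul_div,
    le_div_iff₀ hgJ]
  induction j, hj using Nat.le_induction with
  | base => rfl
  | succ j hj ih =>
    calc c ^ (j + 1) * g J = c * (c ^ j * g J) := by ring
      _ ≤ c * (c ^ J * g j) := by gcongr
      _ = c ^ J * (c * g j) := by ring
      _ ≤ c ^ J * g (j + 1) := by gcongr; exact (hJ j hj).2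

lemma isBigO_sum_range_succ_of_const_mul_le {f g : ℕ → ℝ} {c : ℝ} (hc : 1 < c)
    (hpos : ∀ᶠ j in atTop, 0 < g j) (hgrow : ∀ᶠ j in atTop, c * g j ≤ g (j + 1))
    (hf : f =O[atTop] g) : (fun j => ∑ i ∈ Finset.range (j + 1), f i) =O[atTop] g := by
  obtain ⟨C, hC, hfg⟩ := hf.exists_pos
  obtain ⟨J, hJ⟩ := eventually_atTop.1 (hpos.and (hgrow.and hfg.bound))
  have hgJ := (hJ J le_rfl).1
  set S : ℕ → ℝ := fun j => ‖∑ i ∈ Finset.range (j + 1), f i‖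
  -- With `x = S j / g j`, one step gives `x ↦ x / c + C`, which preserves `x ≤ D`.
  set D : ℝ := S J / g J + C * c / (c - 1)
  have hc' : 0 < c - 1 := sub_pos.2 hc
  have hD : 0 ≤ D := add_nonneg (by positivity) (by positivity)
  have hDc : D + C * c ≤ D * c := by
    have : C * c / (c - 1) ≤ D := le_add_of_nonneg_left (by positivity)
    rw [div_le_iff₀ hc'] at this
    linarith
  refine IsBigO.of_bound D (eventually_atTop.2 ⟨J, fun j hj => ?_⟩)
  rw [Real.norm_of_nonneg (hJ j hj).1.le]
  induction j, hj using Nat.le_induction with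
  | base =>
    rw [← div_le_iff₀ hgJ]
    exact le_add_of_nonneg_right (by positivity)
  | succ j hj ih =>
    obtain ⟨hg', -, hf'⟩ := hJ (j + 1) (by omega)
    rw [Real.norm_of_nonneg hg'.le] at hf'
    rw [Finset.sum_range_succ]
    refine (norm_add_le _ _).trans (le_of_mul_le_mul_left ?_ (zero_lt_one.trans hc))
    calc c * (S j + ‖f (j + 1)‖) ≤ c * (D * g j + C * g (j + 1)) := by gcongr
      _ = D * (c * g j) + C * c * g (j + 1) := by ring
      _ ≤ D * g (j + 1) + C * c * g (j + 1) :=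
          add_le_add_left (mul_le_mul_of_nonneg_left (hJ j hj).2.1 hD) _
      _ = (D + C * c) * g (j + 1) := by ring
      _ ≤ D * c * g (j + 1) := by gcongr
      _ = c * (D * g (j + 1)) := by ring

lemma isTheta_natFloor_rpow_inv_pow {ι : Type*} {l : Filter ι} {g : ι → ℝ} {n : ℕ} (hn : n ≠ 0)
    (hg : Tendsto g l atTop) :
    (fun i => ((⌊g i ^ (n⁻¹ : ℝ)⌋₊ : ℕ) : ℝ) ^ n) =Θ[l] g := by
  have hroot : Tendsto (fun i => g i ^ (n⁻¹ : ℝ)) l atTop :=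
    (tendsto_rpow_atTop (by positivity)).comp hg
  refine ((isEquivalent_nat_floor.comp_tendsto hroot).pow n).isTheta.trans_eventuallyEq ?_
  filter_upwards [hg.eventually_ge_atTop 0] with i hi
  exact Real.rpow_inv_natCast_pow hi hn

lemma tendsto_natLog_atTop {b : ℕ} (hb : 1 < b) : Tendsto (Nat.log b) atTop atTop :=
  tendsto_atTop.2 fun k => (eventually_ge_atTop (b ^ k)).mono fun _ hN => Nat.le_log_of_pow_le hb hN

variable {L : ℕ → ℕ} {g : ℕ → ℝ}

lemma eventually_mul_two_pow_le_sq_of_isBigO (C : ℕ)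
    (hL : (fun j => (4 : ℝ) ^ j) =O[atTop] fun j => (L j : ℝ) ^ 3) :
    ∀ᶠ j in atTop, C * 2 ^ j ≤ L j ^ 2 := by
  have h8 : (fun j => (8 : ℝ) ^ j) =o[atTop] fun j => (L j : ℝ) ^ 6 :=
    (isLittleO_pow_pow_of_lt_left (by norm_num) (by norm_num : (8 : ℝ) < 16)).trans_isBigO
      ((hL.pow 2).congr (fun j => by rw [← pow_mul, mul_comm, pow_mul]; norm_num)
        fun j => by rw [← pow_mul])
  filter_upwards [(h8.const_mul_left ((C : ℝ) ^ 3)).bound one_pos] with j hj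
  rw [one_mul, Real.norm_of_nonneg (by positivity), Real.norm_of_nonneg (by positivity)] at hj
  refine le_of_pow_le_pow_left₀ three_ne_zero (Nat.zero_le _) ?_
  rw [mul_pow, ← pow_mul, ← pow_mul, mul_comm j, pow_mul]
  exact_mod_cast hj

lemma addEnergy_trunc_blockSeq_isBigO (hpos : ∀ᶠ j in atTop, 0 < g j)
    (hgrow : ∀ᶠ j in atTop, 4 * g j ≤ g (j + 1))
    (hL : (fun j => (L j : ℝ) ^ 3) =O[atTop] g) :
    (fun N => (addEnergy (trunc (blockSeq L) N) : ℝ)) =O[atTop] fun N => g (Nat.log 2 N) := by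
  have hbound : (fun j => 8 * (4 : ℝ) ^ j + ∑ i ∈ Finset.range (j + 1), (L i : ℝ) ^ 3)
      =O[atTop] g :=
    ((isBigO_const_pow_of_const_mul_le (by norm_num) hpos hgrow).const_mul_left 8).add
      (isBigO_sum_range_succ_of_const_mul_le (by norm_num) hpos hgrow hL)
  refine (IsBigO.of_norm_le fun N => ?_).trans
    (hbound.comp_tendsto (tendsto_natLog_atTop one_lt_two))
  have hN : N ^ 2 ≤ (2 ^ (Nat.log 2 N + 1)) ^ 2 :=
    Nat.pow_le_pow_left (Nat.lt_pow_succ_log_self one_lt_two N).le 2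
  have h4 : 2 * (2 ^ (Nat.log 2 N + 1)) ^ 2 = 8 * 4 ^ Nat.log 2 N := by
    rw [← pow_mul, mul_comm _ 2, pow_mul, pow_succ]; ring
  rw [Real.norm_natCast, Function.comp_apply]
  exact_mod_cast (addEnergy_trunc_blockSeq_le L N).trans (Nat.add_le_add_right (by linarith) _)

lemma isBigO_addEnergy_trunc_blockSeq (hL : ∀ᶠ j in atTop, L j ≤ 2 ^ j)
    (hg : (fun j => g (j + 1)) =O[atTop] fun j => (L j : ℝ) ^ 3) :
    (fun N => g (Nat.log 2 N)) =O[atTop] fun N => (addEnergy (trunc (blockSeq L) N) : ℝ) := by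
  have hlog := tendsto_natLog_atTop one_lt_two
  have hpred : Tendsto (fun N => Nat.log 2 N - 1) atTop atTop := (tendsto_sub_atTop_nat 1).comp hlog
  have hpred_add : (fun N => g (Nat.log 2 N - 1 + 1)) =ᶠ[atTop] fun N => g (Nat.log 2 N) := by
    filter_upwards [hlog.eventually_ge_atTop 1] with N hN
    rw [Nat.sub_add_cancel hN]
  refine (hpred_add.symm.trans_isBigO (hg.comp_tendsto hpred)).trans
    (IsBigO.of_bound 2 ?_)
  filter_upwards [hpred.eventually hL, hlog.eventually_ge_atTop 1, eventually_ge_atTop 1]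
    with N hLN hN hN1
  have hblock : 2 ^ (Nat.log 2 N - 1 + 1) ≤ N := by
    rw [Nat.sub_add_cancel hN]
    exact Nat.pow_log_le_self 2 (by omega)
  rw [Real.norm_natCast, Function.comp_apply, Real.norm_of_nonneg (by positivity)]
  exact_mod_cast pow_three_le_two_mul_addEnergy_trunc_blockSeq hLN hblock

theorem exists_addEnergy_trunc_blockSeq_isTheta_and_volume_NPPC_eq_one
    (hpos : ∀ᶠ j in atTop, 0 < g j) (hle : ∀ᶠ j in atTop, g j ≤ 8 ^ j)
    (hgrow : ∀ᶠ j in atTop, 4 * g j ≤ g (j + 1))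
    (hgrow' : (fun j => g (j + 1)) =O[atTop] g) (hsum : ¬ Summable fun j => g j / 8 ^ j) :
    ∃ L : ℕ → ℕ, (fun N => (addEnergy (trunc (blockSeq L) N) : ℝ))
      =Θ[atTop] (fun N => g (Nat.log 2 N)) ∧ volume (NPPC (blockSeq L)) = 1 := by
  have hfour : (fun j => (4 : ℝ) ^ j) =O[atTop] g :=
    isBigO_const_pow_of_const_mul_le (by norm_num) hpos hgrow
  have htop : Tendsto g atTop atTop := by
    refine (hfour.trans_tendsto_norm_atTop (tendsto_norm_atTop_atTop.comp
      (tendsto_pow_atTop_atTop_of_one_lt (by norm_num)))).congr' ?_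
    filter_upwards [hpos] with j hj using Real.norm_of_nonneg hj.le
  set L : ℕ → ℕ := fun j => ⌊g j ^ ((3 : ℕ)⁻¹ : ℝ)⌋₊
  have hcube : (fun j => (L j : ℝ) ^ 3) =Θ[atTop] g :=
    isTheta_natFloor_rpow_inv_pow three_ne_zero htop
  have hL : ∀ᶠ j in atTop, L j ≤ 2 ^ j := by
    filter_upwards [hpos, hle] with j hj hj'
    refine Nat.floor_le_of_le ?_
    rw [Real.rpow_inv_le_iff_of_pos hj.le (by positivity) (by positivity), Real.rpow_natCast]
    refine hj'.trans_eq ?_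
    push_cast
    rw [← pow_mul, mul_comm, pow_mul]
    norm_num
  refine ⟨L, ⟨addEnergy_trunc_blockSeq_isBigO hpos hgrow hcube.isBigO,
    isBigO_addEnergy_trunc_blockSeq hL (hgrow'.trans hcube.isBigO_symm)⟩,
    volume_NPPC_blockSeq_eq_one hL
      (eventually_mul_two_pow_le_sq_of_isBigO 52 (hfour.trans hcube.isBigO_symm)) fun h => hsum ?_⟩
  exact summable_of_isBigO_nat h (hcube.isBigO_symm.mul (isBigO_refl _ _))

end EnergyAsymptotics

section PrescribedEnergy

open Asymptotics

variable {f : ℝ → ℝ}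

lemma tendsto_two_pow_atTop : Tendsto (fun j : ℕ => (2 : ℝ) ^ j) atTop atTop :=
  tendsto_pow_atTop_atTop_of_one_lt one_lt_two

lemma isTheta_comp_two_pow_natLog {C : ℝ} (hpos : ∀ᶠ x in atTop, 0 ≤ f x)
    (hmono : ∀ᶠ x in atTop, ∀ y, x ≤ y → f x ≤ f y)
    (hdouble : ∀ᶠ x in atTop, f (2 * x) ≤ C * f x) :
    (fun N : ℕ => f (2 ^ Nat.log 2 N)) =Θ[atTop] fun N : ℕ => f N := by
  have hcast := tendsto_natCast_atTop_atTop (R := ℝ)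
  have hpow : Tendsto (fun N => (2 : ℝ) ^ Nat.log 2 N) atTop atTop :=
    tendsto_two_pow_atTop.comp (tendsto_natLog_atTop one_lt_two)
  have hle : ∀ᶠ N : ℕ in atTop, (2 : ℝ) ^ Nat.log 2 N ≤ N := by
    filter_upwards [eventually_ne_atTop 0] with N hN
    exact_mod_cast Nat.pow_log_le_self 2 hN
  constructor
  · refine IsBigO.of_bound' ?_
    filter_upwards [hpow.eventually hpos, hpow.eventually hmono, hle] with N hN hN' hN''
    rw [Real.norm_of_nonneg hN]
    exact (hN' _ hN'').trans (le_abs_self _)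
  · refine IsBigO.of_bound C ?_
    filter_upwards [hcast.eventually hpos, hcast.eventually hmono, hpow.eventually hpos,
      hpow.eventually hdouble] with N hN hN' hN'' hN2
    rw [Real.norm_of_nonneg hN, Real.norm_of_nonneg hN'']
    refine (hN' _ ?_).trans hN2
    rw [← pow_succ']
    exact_mod_cast (Nat.lt_pow_succ_log_self one_lt_two N).le

lemma eventually_four_mul_pow_three_div_le (hpos : ∀ᶠ x in atTop, 0 < f x)
    (hdouble : ∀ᶠ x in atTop, f (2 * x) ≤ 2 * f x) :
    ∀ᶠ x in atTop, 4 * (x ^ 3 / f x) ≤ (2 * x) ^ 3 / f (2 * x) := by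
  filter_upwards [hpos, (tendsto_id.const_mul_atTop two_pos).eventually hpos, hdouble,
    eventually_ge_atTop 0] with x hx hx' hx2 hx0
  rw [id] at hx'
  rw [← mul_div_assoc, div_le_div_iff₀ hx hx']
  calc 4 * x ^ 3 * f (2 * x) ≤ 4 * x ^ 3 * (2 * f x) := by gcongr
    _ = (2 * x) ^ 3 * f x := by ring

lemma eventually_pow_three_div_le_eight_mul (hpos : ∀ᶠ x in atTop, 0 < f x)
    (hmono : ∀ᶠ x in atTop, ∀ y, x ≤ y → f x ≤ f y) :
    ∀ᶠ x in atTop, (2 * x) ^ 3 / f (2 * x) ≤ 8 * (x ^ 3 / f x) := by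
  filter_upwards [hpos, hmono, eventually_ge_atTop 0] with x hx hx' hx0
  calc (2 * x) ^ 3 / f (2 * x) ≤ (2 * x) ^ 3 / f x :=
        div_le_div_of_nonneg_left (by positivity) hx (hx' _ (by linarith))
    _ = 8 * (x ^ 3 / f x) := by ring

theorem exists_seq_addEnergy_isTheta_volume_NPPC_eq_one (hone : ∀ᶠ x in atTop, 1 ≤ f x)
    (hmono : ∀ᶠ x in atTop, ∀ y, x ≤ y → f x ≤ f y)
    (hdouble : ∀ᶠ x in atTop, f (2 * x) ≤ 2 * f x)
    (hsum : ¬ Summable fun j : ℕ => 1 / f (2 ^ j)) :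
    ∃ a : ℕ → ℕ, (∀ n, 1 ≤ n → a n < a (n + 1)) ∧ 0 < a 1 ∧
      (fun N => (addEnergy (trunc a N) : ℝ)) =Θ[atTop] (fun N : ℕ => (N : ℝ) ^ 3 / f N) ∧
      volume (NPPC a) = 1 := by
  set g : ℕ → ℝ := fun j => (2 ^ j) ^ 3 / f (2 ^ j)
  have hpos : ∀ᶠ x in atTop, 0 < f x := hone.mono fun _ => zero_lt_one.trans_le
  have hgpos : ∀ᶠ j in atTop, 0 < g j := by
    filter_upwards [tendsto_two_pow_atTop.eventually hpos] with j hj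
    exact div_pos (by positivity) hj
  have hle : ∀ᶠ j in atTop, g j ≤ 8 ^ j := by
    filter_upwards [tendsto_two_pow_atTop.eventually hone] with j hj
    rw [show (8 : ℝ) = 2 ^ 3 by norm_num, pow_right_comm]
    exact div_le_self (by positivity) hj
  have hgrow : ∀ᶠ j in atTop, 4 * g j ≤ g (j + 1) := by
    filter_upwards [tendsto_two_pow_atTop.eventually
      (eventually_four_mul_pow_three_div_le hpos hdouble)] with j hj
    rwa [← pow_succ'] at hj
  have hgrow' : (fun j => g (j + 1)) =O[atTop] g := by
    refine IsBigO.of_bound 8 ?_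
    filter_upwards [hgpos, (tendsto_add_atTop_nat 1).eventually hgpos,
      tendsto_two_pow_atTop.eventually (eventually_pow_three_div_le_eight_mul hpos hmono)]
      with j hg hg' hj
    rw [← pow_succ'] at hj
    rwa [Real.norm_of_nonneg hg.le, Real.norm_of_nonneg hg'.le]
  have hsum' : ¬ Summable fun j => g j / 8 ^ j := by
    convert hsum using 3 with j
    rw [show (8 : ℝ) = 2 ^ 3 by norm_num, pow_right_comm, div_right_comm,
      div_self (by positivity)]
  obtain ⟨L, hE, hvol⟩ := exists_addEnergy_trunc_blockSeq_isTheta_and_volume_NPPC_eq_one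
    hgpos hle hgrow hgrow' hsum'
  refine ⟨blockSeq L, fun n hn => blockSeq_lt_blockSeq_succ (by omega), blockSeq_pos one_ne_zero,
    hE.trans (IsTheta.div (IsTheta.pow ?_ 3) ?_), hvol⟩
  · exact isTheta_comp_two_pow_natLog (f := id) (C := 2) (eventually_ge_atTop 0)
      (Eventually.of_forall fun _ _ => id) (Eventually.of_forall fun _ => le_rfl)
  · exact isTheta_comp_two_pow_natLog (hpos.mono fun _ => le_of_lt) hmono hdouble

end PrescribedEnergy

section IteratedLog

open Asymptotics

lemma iterLog_succ (k : ℕ) (x : ℝ) : iterLog (k + 1) x = Real.log (iterLog k x) := by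
  induction k generalizing x with
  | zero => rfl
  | succ _ ih => exact ih (Real.log x)

lemma tendsto_iterLog_atTop (k : ℕ) : Tendsto (iterLog k) atTop atTop := by
  induction k with
  | zero => exact tendsto_id
  | succ _ ih => exact ih.comp Real.tendsto_log_atTop

lemma eventually_iterLog_mono (k : ℕ) :
    ∀ᶠ x in atTop, ∀ y, x ≤ y → iterLog k x ≤ iterLog k y := by
  induction k with
  | zero => exact Eventually.of_forall fun _ _ => id
  | succ k ih =>
    filter_upwards [ih, (tendsto_iterLog_atTop k).eventually_gt_atTop 0] with x hmono hpos y hxy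
    rw [iterLog_succ, iterLog_succ]
    exact Real.log_le_log hpos (hmono y hxy)

lemma iterLog_const_mul_isEquivalent {b : ℝ} (hb : 0 < b) {k : ℕ} (hk : 1 ≤ k) :
    (fun x => iterLog k (b * x)) ~[atTop] iterLog k := by
  induction k, hk using Nat.le_induction with
  | base =>
    have hlog : (fun x => Real.log b + Real.log x) ~[atTop] Real.log :=
      IsEquivalent.refl.const_add_of_norm_tendsto_atTop
        (tendsto_norm_atTop_atTop.comp Real.tendsto_log_atTop)
    refine hlog.congr_left ?_
    filter_upwards [eventually_gt_atTop 0] with x hx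
    exact (Real.log_mul hb.ne' hx.ne').symm
  | succ k _ ih =>
    simpa only [← iterLog_succ] using ih.log (tendsto_iterLog_atTop k)

/-- The product `log x · log₂ x · … · log_r x`, by which the additive energy falls short of `N³`. -/
noncomputable def prodIterLog (r : ℕ) (x : ℝ) : ℝ := ∏ k ∈ Finset.Icc 1 r, iterLog k x

lemma prodIterLog_succ (r : ℕ) (x : ℝ) :
    prodIterLog (r + 1) x = prodIterLog r x * iterLog (r + 1) x :=
  Finset.prod_Icc_succ_top (Nat.le_add_left 1 r) _

lemma eventually_one_le_prodIterLog (r : ℕ) : ∀ᶠ x in atTop, 1 ≤ prodIterLog r x := by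
  induction r with
  | zero => exact Eventually.of_forall fun x => by simp [prodIterLog]
  | succ r ih =>
    filter_upwards [ih, (tendsto_iterLog_atTop (r + 1)).eventually_ge_atTop 1] with x hprod hx
    rw [prodIterLog_succ]
    exact one_le_mul_of_one_le_of_one_le hprod hx

lemma eventually_prodIterLog_mono (r : ℕ) :
    ∀ᶠ x in atTop, ∀ y, x ≤ y → prodIterLog r x ≤ prodIterLog r y := by
  have hmono : ∀ᶠ x in atTop, ∀ k ∈ Finset.Icc 1 r, ∀ y, x ≤ y → iterLog k x ≤ iterLog k y :=
    (Finset.eventually_all _).2 fun k _ => eventually_iterLog_mono k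
  have hnonneg : ∀ᶠ x in atTop, ∀ k ∈ Finset.Icc 1 r, 0 ≤ iterLog k x :=
    (Finset.eventually_all _).2 fun k _ => (tendsto_iterLog_atTop k).eventually_ge_atTop 0
  filter_upwards [hmono, hnonneg] with x hx hx0 y hxy
  exact Finset.prod_le_prod hx0 fun k hk => hx k hk y hxy

lemma prodIterLog_const_mul_isEquivalent {b : ℝ} (hb : 0 < b) (r : ℕ) :
    (fun x => prodIterLog r (b * x)) ~[atTop] prodIterLog r :=
  IsEquivalent.finsetProd fun _ hk => iterLog_const_mul_isEquivalent hb (Finset.mem_Icc.1 hk).1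

lemma eventually_prodIterLog_const_mul_le {b c : ℝ} (hb : 0 < b) (hc : 1 < c) (r : ℕ) :
    ∀ᶠ x in atTop, prodIterLog r (b * x) ≤ c * prodIterLog r x := by
  filter_upwards [(prodIterLog_const_mul_isEquivalent hb r).isLittleO.bound (sub_pos.2 hc),
    eventually_one_le_prodIterLog r] with x hx hx1
  rw [Real.norm_of_nonneg (zero_le_one.trans hx1)] at hx
  have hdiff : prodIterLog r (b * x) - prodIterLog r x ≤ (c - 1) * prodIterLog r x :=
    (le_abs_self _).trans hx
  linarith

lemma eventually_iterLog_two_pow_succ_sub_le (r : ℕ) :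
    ∀ᶠ j : ℕ in atTop, iterLog (r + 1) (2 ^ (j + 1)) - iterLog (r + 1) (2 ^ j) ≤
      1 / prodIterLog r (2 ^ j) := by
  induction r with
  | zero =>
    refine Eventually.of_forall fun j => ?_
    simp only [iterLog, Real.log_pow, prodIterLog, Nat.cast_succ,
      Finset.Icc_eq_empty_of_lt zero_lt_one, Finset.prod_empty, div_one]
    linarith [Real.log_two_lt_d9]
  | succ r ih =>
    have hpos := tendsto_two_pow_atTop.eventually
      ((tendsto_iterLog_atTop (r + 1)).eventually_gt_atTop 0)
    filter_upwards [ih, hpos, (tendsto_add_atTop_nat 1).eventually hpos] with j hj hx hy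
    set x := iterLog (r + 1) (2 ^ j)
    set y := iterLog (r + 1) (2 ^ (j + 1))
    rw [iterLog_succ (r + 1), iterLog_succ (r + 1), prodIterLog_succ, ← div_div]
    calc Real.log y - Real.log x = Real.log (y / x) := (Real.log_div hy.ne' hx.ne').symm
      _ ≤ y / x - 1 := Real.log_le_sub_one_of_pos (div_pos hy hx)
      _ = (y - x) / x := by rw [sub_div, div_self hx.ne']
      _ ≤ 1 / prodIterLog r (2 ^ j) / x := by gcongr

lemma not_summable_one_div_prodIterLog_two_pow (r : ℕ) :
    ¬ Summable fun j : ℕ => 1 / prodIterLog r (2 ^ j) := by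
  intro hs
  set u : ℕ → ℝ := fun j => iterLog (r + 1) (2 ^ j)
  have hu : Tendsto u atTop atTop := (tendsto_iterLog_atTop (r + 1)).comp tendsto_two_pow_atTop
  have hdiff : Summable fun j => u (j + 1) - u j := by
    refine hs.of_norm_bounded_eventually_nat ?_
    filter_upwards [eventually_iterLog_two_pow_succ_sub_le r,
      tendsto_two_pow_atTop.eventually (eventually_iterLog_mono (r + 1))] with j hle hmono
    rwa [Real.norm_of_nonneg
      (sub_nonneg.2 (hmono _ (pow_le_pow_right₀ one_le_two j.le_succ)))]
  have hlim := hdiff.hasSum.tendsto_sum_nat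
  simp only [Finset.sum_range_sub] at hlim
  exact not_tendsto_atTop_of_tendsto_nhds hlim (tendsto_atTop_add_const_right _ (-u 0) hu)

end IteratedLog

theorem full_measure_with_iterated_log_energy (r : ℕ) (hr : 1 ≤ r) :
    ∃ a : ℕ → ℕ, (∀ n, 1 ≤ n → a n < a (n + 1)) ∧ 0 < a 1 ∧
      (∃ C₁ : ℝ, 0 < C₁ ∧ ∃ C₂ : ℝ, 0 < C₂ ∧ ∀ᶠ N : ℕ in atTop,
        C₁ * ((N : ℝ) ^ 3 / ∏ k ∈ Finset.Icc 1 r, iterLog k (N : ℝ)) ≤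
            (addEnergy (trunc a N) : ℝ) ∧
        (addEnergy (trunc a N) : ℝ) ≤
            C₂ * ((N : ℝ) ^ 3 / ∏ k ∈ Finset.Icc 1 r, iterLog k (N : ℝ))) ∧
      volume (NPPC a) = 1 := by
  obtain ⟨a, ha, ha1, ⟨hupper, hlower⟩, hvol⟩ :=
    exists_seq_addEnergy_isTheta_volume_NPPC_eq_one (eventually_one_le_prodIterLog r)
      (eventually_prodIterLog_mono r) (eventually_prodIterLog_const_mul_le two_pos one_lt_two r)
      (not_summable_one_div_prodIterLog_two_pow r)
  obtain ⟨C₂, hC₂, hupper⟩ := hupper.exists_pos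
  obtain ⟨C₁, hC₁, hlower⟩ := hlower.exists_pos
  refine ⟨a, ha, ha1, ⟨C₁⁻¹, inv_pos.2 hC₁, C₂, hC₂, ?_⟩, hvol⟩
  filter_upwards [hupper.bound, hlower.bound,
    tendsto_natCast_atTop_atTop.eventually (eventually_one_le_prodIterLog r)] with N hu hl hN
  have hnonneg : 0 ≤ (N : ℝ) ^ 3 / prodIterLog r N :=
    div_nonneg (by positivity) (zero_le_one.trans hN)
  rw [Real.norm_natCast, Real.norm_of_nonneg hnonneg] at hu hl
  exact ⟨(inv_mul_le_iff₀ hC₁).2 hl, hu⟩
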